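/- Let n be an odd positive integer. There exists θ_c > 0 such that for every θ with 0 < θ < θ_c: the function Φ_n^θ has no critical zero, its nodal set N(Φ_n^θ) is connected, and ℝ² ∖ N(Φ_n^θ) has exactly two connected components (i.e. Φ_n^θ has exactly two nodal domains). -/

import Mathlib

open Polynomial Real Set

/-- Physicists' Hermite polynomials: `H 0 = 1`, `H 1 = 2X`,
`H (n+2) = 2X * H (n+1) - 2(n+1) * H n`. -/
noncomputable def hermiteH : ℕ → Polynomial ℝ
  | 0 => 1
  | 1 => Polynomial.C 2 * Polynomial.X
  | (n + 2) => Polynomial.C 2 * Polynomial.X * hermiteH (n + 1)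
      - Polynomial.C ((2 * (n + 1) : ℕ) : ℝ) * hermiteH n

/-- `z : Fin m → ℝ` enumerates the zeros of `P` in increasing order. -/
def IsZeroEnum (P : Polynomial ℝ) (m : ℕ) (z : Fin m → ℝ) : Prop :=
  StrictMono z ∧ (∀ i, P.eval (z i) = 0) ∧ (∀ x : ℝ, P.eval x = 0 → ∃ i, x = z i)

/-- The eigenfunction `Φ_n^θ`. -/
noncomputable def Phi (n : ℕ) (θ : ℝ) (p : ℝ × ℝ) : ℝ :=
  (Real.cos θ * (hermiteH n).eval p.1 + Real.sin θ * (hermiteH n).eval p.2) *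
    Real.exp (-(p.1 ^ 2 + p.2 ^ 2) / 2)

/-- A critical zero of `u` : a common zero of `u` and its differential. -/
def IsCriticalZero (u : ℝ × ℝ → ℝ) (p : ℝ × ℝ) : Prop :=
  u p = 0 ∧ fderiv ℝ u p = 0

/-- Nodal set of `u`. -/
def nodalSet (u : ℝ × ℝ → ℝ) : Set (ℝ × ℝ) := {p | u p = 0}

/-- The set of nodal domains of `u`, i.e. of connected components of the
complement of the nodal set. -/
def nodalDomains (u : ℝ × ℝ → ℝ) : Set (Set (ℝ × ℝ)) :=
  {C | ∃ p, u p ≠ 0 ∧ C = connectedComponentIn {q | u q ≠ 0} p}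

open Filter Topology

/-! ### Unicoherence of the plane -/

/-- A set on which a continuous function takes only integer values is mapped to a single integer
if it is preconnected. -/
theorem IsPreconnected.exists_int_eq_of_continuous {X : Type*} [TopologicalSpace X] {A : Set X}
    (hA : IsPreconnected A) {f : X → ℝ} (hf : Continuous f)
    (h : ∀ x ∈ A, (f x : AddCircle (1 : ℝ)) = 0) : ∃ k : ℤ, ∀ x ∈ A, f x = k := by
  have hval : ∀ x ∈ A, ∃ k : ℤ, f x = k := by
    intro x hx
    obtain ⟨k, hk⟩ := (AddCircle.coe_eq_zero_iff (1 : ℝ)).1 (h x hx)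
    exact ⟨k, by simpa using hk.symm⟩
  rcases A.eq_empty_or_nonempty with rfl | ⟨a, ha⟩
  · exact ⟨0, by simp⟩
  obtain ⟨k, hk⟩ := hval a ha
  refine ⟨k, fun x hx => ?_⟩
  obtain ⟨l, hl⟩ := hval x hx
  rw [hl]
  by_contra hne
  have hord : OrdConnected (f '' A) := (hA.image f hf.continuousOn).ordConnected
  have hmem : ∀ i j : ℤ, (i : ℝ) ∈ f '' A → (j : ℝ) ∈ f '' A → i < j → False := by
    intro i j hi hj hij
    have hij' : (i : ℝ) + 1 ≤ j := by exact_mod_cast hij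
    obtain ⟨y, hy, hfy⟩ := hord.out hi hj
      (show (i : ℝ) + 1 / 2 ∈ Icc (i : ℝ) j from ⟨by linarith, by linarith⟩)
    obtain ⟨q, hq⟩ := hval y hy
    have h1 : ((2 * q : ℤ) : ℝ) = ((2 * i + 1 : ℤ) : ℝ) := by push_cast; linarith
    have h2 : 2 * q = 2 * i + 1 := by exact_mod_cast h1
    omega
  have hkm : (k : ℝ) ∈ f '' A := ⟨a, ha, hk⟩
  have hlm : (l : ℝ) ∈ f '' A := ⟨x, hx, hl⟩
  rcases lt_trichotomy k l with hlt | heq | hlt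
  · exact hmem k l hkm hlm hlt
  · exact hne (by rw [heq])
  · exact hmem l k hlm hkm hlt

/-- A simply connected, locally path connected normal space is unicoherent: if it is the union of
two preconnected closed sets, then their intersection is preconnected. -/
theorem IsPreconnected.inter_of_union_eq_univ {X : Type*} [TopologicalSpace X] [NormalSpace X]
    [SimplyConnectedSpace X] [LocallyPathConnectedSpace X] {A B : Set X}
    (hA : IsPreconnected A) (hB : IsPreconnected B) (hAc : IsClosed A) (hBc : IsClosed B)
    (hAB : A ∪ B = univ) : IsPreconnected (A ∩ B) := by
  classical
  rw [isPreconnected_closed_iff]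
  intro C D hC hD hsub ⟨a, haAB, haC⟩ ⟨b, hbAB, hbD⟩
  by_contra hemp
  rw [not_nonempty_iff_eq_empty] at hemp
  have hdisj : Disjoint (A ∩ B ∩ C) (A ∩ B ∩ D) := by
    rw [Set.disjoint_iff_inter_eq_empty, ← hemp]
    ext x; simp only [mem_inter_iff]; tauto
  obtain ⟨u, hu0, hu1, -⟩ := exists_continuous_zero_one_of_isClosed
    ((hAc.inter hBc).inter hC) ((hAc.inter hBc).inter hD) hdisj
  let g : X → AddCircle (1 : ℝ) :=
    A.piecewise (fun x => ((u x / 2 : ℝ) : AddCircle (1 : ℝ)))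
      (fun x => ((-(u x / 2) : ℝ) : AddCircle (1 : ℝ)))
  have hcoe : Continuous ((↑) : ℝ → AddCircle (1 : ℝ)) := AddCircle.continuous_mk' 1
  have hgA : ∀ x ∈ A, g x = ((u x / 2 : ℝ) : AddCircle (1 : ℝ)) := fun x hx =>
    Set.piecewise_eq_of_mem _ _ _ hx
  have hgB : ∀ x ∈ B, g x = ((-(u x / 2) : ℝ) : AddCircle (1 : ℝ)) := by
    intro x hx
    by_cases hxA : x ∈ A
    · rw [hgA x hxA]
      rcases hsub ⟨hxA, hx⟩ with hxC | hxD
      · have h0 : u x = 0 := hu0 ⟨⟨hxA, hx⟩, hxC⟩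
        simp [h0]
      · have h1 : u x = 1 := hu1 ⟨⟨hxA, hx⟩, hxD⟩
        rw [h1, ← sub_eq_zero, ← AddCircle.coe_sub, AddCircle.coe_eq_zero_iff]
        exact ⟨1, by norm_num⟩
    · exact Set.piecewise_eq_of_notMem _ _ _ hxA
  have hg : Continuous g := by
    rw [← continuousOn_univ, ← hAB]
    refine ContinuousOn.union_of_isClosed ?_ ?_ hAc hBc
    · refine ContinuousOn.congr (Continuous.continuousOn ?_) hgA
      exact hcoe.comp (by fun_prop)
    · refine ContinuousOn.congr (Continuous.continuousOn ?_) hgB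
      exact hcoe.comp (by fun_prop)
  obtain ⟨e, he⟩ := QuotientAddGroup.mk_surjective (g a)
  obtain ⟨φ, ⟨-, hφ⟩, -⟩ := (AddCircle.isCoveringMap_coe (1 : ℝ)).existsUnique_continuousMap_lifts
    ⟨g, hg⟩ a e he
  have hφ' : ∀ x, (φ x : AddCircle (1 : ℝ)) = g x := fun x => congrFun hφ x
  obtain ⟨k, hk⟩ := hA.exists_int_eq_of_continuous (f := fun x => φ x - u x / 2) (by fun_prop)
    (fun x hx => by rw [AddCircle.coe_sub, hφ', hgA x hx, sub_self])
  obtain ⟨l, hl⟩ := hB.exists_int_eq_of_continuous (f := fun x => φ x - -(u x / 2)) (by fun_prop)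
    (fun x hx => by rw [AddCircle.coe_sub, hφ', hgB x hx, sub_self])
  have ha0 : u a = 0 := hu0 ⟨haAB, haC⟩
  have hb1 : u b = 1 := hu1 ⟨hbAB, hbD⟩
  have h1 := hk a haAB.1
  have h2 := hl a haAB.2
  have h3 := hk b hbAB.1
  have h4 := hl b hbAB.2
  simp only [ha0, hb1] at h1 h2 h3 h4
  linarith

/-! ### Functions with connected positivity and negativity sets -/

/-- If a function has no critical zero, the closure of its positivity set contains its zeros. -/
theorem setOf_nonneg_subset_closure {u : ℝ × ℝ → ℝ} (hcrit : ∀ p, ¬ IsCriticalZero u p) :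
    {p | 0 ≤ u p} ⊆ closure {p | 0 < u p} := by
  intro p hp
  rcases (show 0 ≤ u p from hp).lt_or_eq with h | h
  · exact subset_closure h
  by_contra hcl
  refine hcrit p ⟨h.symm, IsLocalMax.fderiv_eq_zero ?_⟩
  filter_upwards [isClosed_closure.isOpen_compl.mem_nhds hcl] with q hq
  rw [← h]
  exact not_lt.1 fun hq' => hq (subset_closure hq')

theorem isConnected_nodalSet {u : ℝ × ℝ → ℝ} (hu : Continuous u)
    (hcrit : ∀ p, ¬ IsCriticalZero u p) (hpos : IsConnected {p | 0 < u p})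
    (hneg : IsConnected {p | u p < 0}) : IsConnected (nodalSet u) := by
  have hA : IsPreconnected {p | 0 ≤ u p} :=
    hpos.isPreconnected.subset_closure (fun p (hp : 0 < u p) => hp.le)
      (setOf_nonneg_subset_closure hcrit)
  have hB : IsPreconnected {p | u p ≤ 0} := by
    refine hneg.isPreconnected.subset_closure (fun p (hp : u p < 0) => hp.le) ?_
    have hcrit' : ∀ p, ¬ IsCriticalZero (-u) p := by
      rintro p ⟨h0, h1⟩
      refine hcrit p ⟨by simpa using h0, ?_⟩
      rw [fderiv_neg] at h1
      simpa using h1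
    simpa using setOf_nonneg_subset_closure hcrit'
  have heq : nodalSet u = {p | 0 ≤ u p} ∩ {p | u p ≤ 0} := by
    ext p
    simp only [nodalSet, mem_ofPred_eq, mem_inter_iff]
    exact ⟨fun h => ⟨h.ge, h.le⟩, fun h => le_antisymm h.2 h.1⟩
  constructor
  · obtain ⟨p, hp⟩ := hpos.nonempty
    obtain ⟨q, hq⟩ := hneg.nonempty
    exact mem_range_of_exists_le_of_exists_ge hu ⟨q, le_of_lt hq⟩ ⟨p, le_of_lt hp⟩
  · rw [heq]
    refine hA.inter_of_union_eq_univ hB (isClosed_le continuous_const hu)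
      (isClosed_le hu continuous_const) ?_
    ext p
    simpa using le_total 0 (u p)

theorem ncard_nodalDomains_eq_two {u : ℝ × ℝ → ℝ} (hu : Continuous u)
    (hpos : IsConnected {p | 0 < u p}) (hneg : IsConnected {p | u p < 0}) :
    (nodalDomains u).ncard = 2 := by
  have key : ∀ p, u p ≠ 0 → ∀ S : Set (ℝ × ℝ), IsPreconnected S → p ∈ S →
      (∀ q ∈ S, u q ≠ 0) → (∀ q, u q ≠ 0 → q ∉ S → u p * u q < 0) →
      connectedComponentIn {q | u q ≠ 0} p = S := by
    intro p hp S hS hpS hSu hopp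
    refine Subset.antisymm (fun q hq => ?_) (hS.subset_connectedComponentIn hpS hSu)
    by_contra hqS
    have hq0 : u q ≠ 0 := connectedComponentIn_subset _ _ hq
    have hord : OrdConnected (u '' connectedComponentIn {q | u q ≠ 0} p) :=
      (isPreconnected_connectedComponentIn.image u hu.continuousOn).ordConnected
    have hpm : u p ∈ u '' connectedComponentIn {q | u q ≠ 0} p :=
      mem_image_of_mem _ (mem_connectedComponentIn hp)
    have hqm : u q ∈ u '' connectedComponentIn {q | u q ≠ 0} p := mem_image_of_mem _ hq
    have h0 : (0 : ℝ) ∈ u '' connectedComponentIn {q | u q ≠ 0} p := by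
      rcases mul_neg_iff.1 (hopp q hq0 hqS) with h | h
      · exact hord.out hqm hpm ⟨h.2.le, h.1.le⟩
      · exact hord.out hpm hqm ⟨h.1.le, h.2.le⟩
    obtain ⟨r, hr, hr0⟩ := h0
    exact connectedComponentIn_subset _ _ hr hr0
  have keypos : ∀ p, 0 < u p → connectedComponentIn {q | u q ≠ 0} p = {q | 0 < u q} := by
    intro p hp
    refine key p hp.ne' _ hpos.isPreconnected hp (fun q hq => ne_of_gt hq) fun q hq hqS => ?_
    exact mul_neg_of_pos_of_neg hp (lt_of_le_of_ne (not_lt.1 hqS) hq)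
  have keyneg : ∀ p, u p < 0 → connectedComponentIn {q | u q ≠ 0} p = {q | u q < 0} := by
    intro p hp
    refine key p hp.ne _ hneg.isPreconnected hp (fun q hq => ne_of_lt hq) fun q hq hqS => ?_
    exact mul_neg_of_neg_of_pos hp (lt_of_le_of_ne (not_lt.1 hqS) hq.symm)
  have heq : nodalDomains u = {{q | 0 < u q}, {q | u q < 0}} := by
    ext C
    simp only [nodalDomains, mem_ofPred_eq, mem_insert_iff, mem_singleton_iff]
    constructor
    · rintro ⟨p, hp, rfl⟩
      rcases hp.lt_or_gt with h | h
      · exact Or.inr (keyneg p h)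
      · exact Or.inl (keypos p h)
    · rintro (rfl | rfl)
      · obtain ⟨p, hp⟩ := hpos.nonempty
        exact ⟨p, ne_of_gt hp, (keypos p hp).symm⟩
      · obtain ⟨p, hp⟩ := hneg.nonempty
        exact ⟨p, ne_of_lt hp, (keyneg p hp).symm⟩
  rw [heq, ncard_pair]
  intro h
  obtain ⟨p, hp⟩ := hpos.nonempty
  have hp' : p ∈ {q | u q < 0} := h ▸ hp
  exact lt_asymm (show 0 < u p from hp) hp'

/-! ### Connectedness of `{(x, y) | 0 < c * P x + s * P y}` -/

/-- From a point of a superlevel set `{d < P}` with `|d| < m`, where `m` bounds below the modulus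
of all critical values, one can reach the level `m` without leaving the superlevel set. -/
theorem exists_le_and_forall_uIcc_lt {P P' : ℝ → ℝ} {m d x : ℝ}
    (hP : ∀ t, HasDerivAt P (P' t) t) (htop : Tendsto P atTop atTop)
    (hbot : Tendsto P atBot atBot) (hm : ∀ t, P' t = 0 → m ≤ |P t|) (hd : -m < d)
    (hx : d < P x) : ∃ z, m ≤ P z ∧ ∀ t ∈ uIcc x z, d < P t := by
  have hcont : Continuous P := continuous_iff_continuousAt.2 fun t => (hP t).continuousAt
  have hclosed : IsClosed {t | P t ≤ d} := isClosed_le hcont continuous_const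
  by_cases hright : ∀ t, x ≤ t → d < P t
  · obtain ⟨z, hz, hxz⟩ := ((htop.eventually_ge_atTop m).and (eventually_ge_atTop x)).exists
    refine ⟨z, hz, fun t ht => hright t ?_⟩
    rw [uIcc_of_le hxz] at ht
    exact ht.1
  push Not at hright
  obtain ⟨t₁, ht₁, hPt₁⟩ := hright
  obtain ⟨t₀, hPt₀, ht₀⟩ := ((hbot.eventually_le_atBot d).and (eventually_le_atBot x)).exists
  have hbddA : BddAbove ({t | P t ≤ d} ∩ Iic x) := bddAbove_Iic.mono inter_subset_right
  have hbddB : BddBelow ({t | P t ≤ d} ∩ Ici x) := bddBelow_Ici.mono inter_subset_right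
  have haS := (hclosed.inter isClosed_Iic).csSup_mem ⟨t₀, hPt₀, ht₀⟩ hbddA
  have hbS := (hclosed.inter isClosed_Ici).csInf_mem ⟨t₁, hPt₁, ht₁⟩ hbddB
  set a := sSup ({t | P t ≤ d} ∩ Iic x)
  set b := sInf ({t | P t ≤ d} ∩ Ici x)
  have hPa : P a ≤ d := haS.1
  have hPb : P b ≤ d := hbS.1
  have hax : a ≤ x := haS.2
  have hxb : x ≤ b := hbS.2
  have hgt : ∀ t, a < t → t < b → d < P t := by
    intro t hat htb
    by_contra hle
    rw [not_lt] at hle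
    rcases le_total t x with h | h
    · exact absurd (le_csSup hbddA ⟨hle, h⟩) (not_le.2 hat)
    · exact absurd (csInf_le hbddB ⟨hle, h⟩) (not_le.2 htb)
  obtain ⟨z, hz, hmax⟩ := isCompact_Icc.exists_isMaxOn ⟨x, hax, hxb⟩
    (hcont.continuousOn (s := Icc a b))
  have hPz : d < P z := hx.trans_le (hmax ⟨hax, hxb⟩)
  have haz : a < z := lt_of_le_of_ne hz.1 (by rintro h; rw [← h] at hPz; linarith)
  have hzb : z < b := lt_of_le_of_ne hz.2 (by rintro h; rw [h] at hPz; linarith)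
  have hax' : a < x := lt_of_le_of_ne hax (by rintro h; rw [← h] at hx; linarith)
  have hxb' : x < b := lt_of_le_of_ne hxb (by rintro h; rw [h] at hx; linarith)
  have hcrit : P' z = 0 :=
    (hmax.isLocalMax (Icc_mem_nhds haz hzb)).hasDerivAt_eq_zero (hP z)
  refine ⟨z, ?_, fun t ht => ?_⟩
  · rcases le_abs.1 (hm z hcrit) with h | h
    · exact h
    · linarith
  · have := (ordConnected_Ioo (a := a) (b := b)).uIcc_subset ⟨hax', hxb'⟩ ⟨haz, hzb⟩ ht
    exact hgt t this.1 this.2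

theorem joinedIn_of_forall_uIcc_left {S : Set (ℝ × ℝ)} {x x' y : ℝ}
    (h : ∀ t ∈ uIcc x x', (t, y) ∈ S) : JoinedIn S (x, y) (x', y) := by
  refine JoinedIn.of_segment_subset ?_
  rw [← Prod.image_mk_segment_left, segment_eq_uIcc]
  rintro _ ⟨t, ht, rfl⟩
  exact h t ht

theorem joinedIn_of_forall_uIcc_right {S : Set (ℝ × ℝ)} {x y y' : ℝ}
    (h : ∀ t ∈ uIcc y y', (x, t) ∈ S) : JoinedIn S (x, y) (x, y') := by
  refine JoinedIn.of_segment_subset ?_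
  rw [← Prod.image_mk_segment_right, segment_eq_uIcc]
  rintro _ ⟨t, ht, rfl⟩
  exact h t ht

theorem isConnected_setOf_pos_add {P P' : ℝ → ℝ} {c s R m : ℝ}
    (hP : ∀ t, HasDerivAt P (P' t) t) (htop : Tendsto P atTop atTop)
    (hbot : Tendsto P atBot atBot) (hc : 0 < c) (hs : 0 < s) (hR0 : 0 ≤ R)
    (hR : ∀ t, R ≤ |t| → 0 < P' t) (hm : ∀ t, P' t = 0 → m ≤ |P t|)
    (hM : ∀ t, |t| ≤ R → s * |P t| < c * m) :
    IsConnected {p : ℝ × ℝ | 0 < c * P p.1 + s * P p.2} := by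
  have hcont : Continuous P := continuous_iff_continuousAt.2 fun t => (hP t).continuousAt
  have hmono_top : MonotoneOn P (Ici R) := by
    refine (strictMonoOn_of_deriv_pos (convex_Ici R) hcont.continuousOn fun t ht => ?_).monotoneOn
    rw [interior_Ici] at ht
    rw [(hP t).deriv]
    exact hR t ((le_of_lt ht).trans (le_abs_self t))
  have hmono_bot : MonotoneOn P (Iic (-R)) := by
    refine (strictMonoOn_of_deriv_pos (convex_Iic (-R)) hcont.continuousOn
      fun t ht => ?_).monotoneOn
    rw [interior_Iic] at ht
    rw [(hP t).deriv]
    exact hR t ((le_neg.1 (le_of_lt ht)).trans (neg_le_abs t))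
  set S := {p : ℝ × ℝ | 0 < c * P p.1 + s * P p.2} with hS
  have htopjoin : ∀ x y x' y', R ≤ y → R ≤ y' → (x, y) ∈ S → (x', y') ∈ S →
      JoinedIn S (x, y) (x', y') := by
    intro x y x' y' hy hy' hx hx'
    obtain ⟨B, hB⟩ := (isCompact_uIcc (a := x) (b := x')).exists_bound_of_continuousOn
      hcont.continuousOn
    obtain ⟨Y, hY, hyY, hyY'⟩ := ((htop.eventually_gt_atTop (c * B / s)).and
      ((eventually_ge_atTop y).and (eventually_ge_atTop y'))).exists
    have hup : ∀ x y, R ≤ y → y ≤ Y → (x, y) ∈ S → JoinedIn S (x, y) (x, Y) := by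
      intro x y hy hyY hx
      refine joinedIn_of_forall_uIcc_right fun t ht => ?_
      rw [uIcc_of_le hyY] at ht
      have h1 := hmono_top hy (hy.trans ht.1) ht.1
      simp only [hS, mem_ofPred_eq] at hx ⊢
      nlinarith
    refine (hup x y hy hyY hx).trans (JoinedIn.trans ?_ (hup x' y' hy' hyY' hx').symm)
    refine joinedIn_of_forall_uIcc_left fun t ht => ?_
    have h1 := neg_le_of_abs_le (hB t ht)
    rw [div_lt_iff₀ hs] at hY
    simp only [hS, mem_ofPred_eq]
    nlinarith
  have hstrip : ∀ x y, |y| ≤ R → (x, y) ∈ S → ∃ z, JoinedIn S (x, y) (z, R) := by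
    intro x y hy hxy
    simp only [hS, mem_ofPred_eq] at hxy
    have habs : |s * P y| < c * m := by rw [abs_mul, abs_of_pos hs]; exact hM y hy
    have hd : -m < -(s * P y / c) := by
      rw [neg_lt_neg_iff, div_lt_iff₀ hc]
      linarith [le_abs_self (s * P y)]
    have hdx : -(s * P y / c) < P x := by
      rw [neg_lt, ← sub_pos]
      have : 0 < (c * P x + s * P y) / c := div_pos hxy hc
      rw [add_div, mul_div_cancel_left₀ _ hc.ne'] at this
      linarith
    obtain ⟨z, hz, hzt⟩ := exists_le_and_forall_uIcc_lt hP htop hbot hm hd hdx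
    refine ⟨z, JoinedIn.trans (y := (z, y)) ?_ ?_⟩
    · refine joinedIn_of_forall_uIcc_left fun t ht => ?_
      have h1 := hzt t ht
      simp only [hS, mem_ofPred_eq]
      have h2 : -(s * P y) / c < P t := by rwa [neg_div]
      rw [div_lt_iff₀ hc] at h2
      linarith
    · refine joinedIn_of_forall_uIcc_right fun t ht => ?_
      have hyR := abs_le.1 hy
      rw [uIcc_of_le hyR.2] at ht
      have h1 := hM t (abs_le.2 ⟨hyR.1.trans ht.1, ht.2⟩)
      simp only [hS, mem_ofPred_eq]
      nlinarith [neg_abs_le (P t)]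
  have hall : ∀ p ∈ S, ∃ z y, R ≤ y ∧ JoinedIn S p (z, y) := by
    rintro ⟨x, y⟩ hxy
    rcases le_total R y with h | h
    · exact ⟨x, y, h, JoinedIn.refl hxy⟩
    rcases le_total (-R) y with h' | h'
    · obtain ⟨z, hz⟩ := hstrip x y (abs_le.2 ⟨h', h⟩) hxy
      exact ⟨z, R, le_rfl, hz⟩
    · have hseg : ∀ t ∈ uIcc y (-R), (x, t) ∈ S := by
        intro t ht
        rw [uIcc_of_le h'] at ht
        have h1 := hmono_bot h' ht.2 ht.1
        simp only [hS, mem_ofPred_eq] at hxy ⊢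
        nlinarith
      obtain ⟨z, hz⟩ := hstrip x (-R) (by rw [abs_neg, abs_of_nonneg hR0])
        (hseg _ right_mem_uIcc)
      exact ⟨z, R, le_rfl, (joinedIn_of_forall_uIcc_right hseg).trans hz⟩
  obtain ⟨z, hz⟩ := (htop.eventually_gt_atTop (-(s * P R) / c)).exists
  have hzS : (z, R) ∈ S := by
    rw [div_lt_iff₀ hc] at hz
    simp only [hS, mem_ofPred_eq]
    linarith
  refine IsPathConnected.isConnected ⟨(z, R), hzS, fun {p} hp => ?_⟩
  obtain ⟨x, y, hy, hxy⟩ := hall p hp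
  exact (htopjoin z R x y le_rfl hy hzS hxy.target_mem).trans hxy.symm

/-! ### Hermite polynomials -/

theorem eval_hermiteH_add_two (n : ℕ) (t : ℝ) :
    (hermiteH (n + 2)).eval t =
      2 * t * (hermiteH (n + 1)).eval t - 2 * (n + 1) * (hermiteH n).eval t := by
  simp [hermiteH]

theorem derivative_hermiteH_succ (n : ℕ) :
    derivative (hermiteH (n + 1)) = C (2 * (n + 1) : ℝ) * hermiteH n := by
  induction n using Nat.twoStepInduction with
  | zero => simp [hermiteH]
  | one => simp [hermiteH]; ring
  | more n ih₁ ih₂ =>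
    rw [hermiteH, derivative_sub, derivative_mul, ih₂, derivative_C_mul, derivative_C_mul, ih₁,
      hermiteH]
    simp [show C (2 : ℝ) = 2 from rfl]
    ring

theorem hasDerivAt_eval_hermiteH_succ (n : ℕ) (t : ℝ) :
    HasDerivAt (fun t => (hermiteH (n + 1)).eval t) (2 * (n + 1) * (hermiteH n).eval t) t := by
  have := (hermiteH (n + 1)).hasDerivAt t
  rwa [derivative_hermiteH_succ, eval_mul, eval_C] at this

theorem eval_neg_hermiteH (n : ℕ) (t : ℝ) :
    (hermiteH n).eval (-t) = (-1) ^ n * (hermiteH n).eval t := by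
  induction n using Nat.twoStepInduction with
  | zero => simp [hermiteH]
  | one => simp [hermiteH]
  | more n ih₁ ih₂ =>
    rw [eval_hermiteH_add_two, eval_hermiteH_add_two, ih₁, ih₂]
    ring

theorem eval_hermiteH_succ_ne_zero {n : ℕ} {t : ℝ} (h : (hermiteH n).eval t = 0) :
    (hermiteH (n + 1)).eval t ≠ 0 := by
  induction n with
  | zero => simp [hermiteH] at h
  | succ n ih =>
    intro h'
    rw [eval_hermiteH_add_two, h] at h'
    have : (hermiteH n).eval t = 0 := by
      have hn : (2 * (n + 1) : ℝ) ≠ 0 := by positivity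
      simpa [hn] using h'
    exact ih this h

theorem one_le_eval_hermiteH_and_le_succ (n : ℕ) {t : ℝ} (ht : (n + 1 : ℝ) ≤ t) :
    1 ≤ (hermiteH n).eval t ∧ (hermiteH n).eval t + t ≤ (hermiteH (n + 1)).eval t := by
  induction n with
  | zero =>
    simp [hermiteH] at ht ⊢
    linarith
  | succ n ih =>
    push_cast at ht
    have hn : (0 : ℝ) ≤ n := Nat.cast_nonneg n
    obtain ⟨h1, h2⟩ := ih (by linarith)
    have h3 : 1 ≤ (hermiteH (n + 1)).eval t := by linarith
    refine ⟨h3, ?_⟩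
    rw [eval_hermiteH_add_two]
    nlinarith

theorem tendsto_eval_hermiteH_succ_atTop (n : ℕ) :
    Tendsto (fun t => (hermiteH (n + 1)).eval t) atTop atTop := by
  refine tendsto_atTop_mono' atTop ?_ tendsto_id
  filter_upwards [eventually_ge_atTop (n + 1 : ℝ)] with t ht
  have := one_le_eval_hermiteH_and_le_succ n ht
  simp only [id]
  linarith

/-! ### The functions `Phi n θ` -/

theorem continuous_Phi (n : ℕ) (θ : ℝ) : Continuous (Phi n θ) := by
  unfold Phi
  fun_prop

theorem IsCriticalZero.eval_derivative_eq_zero {n : ℕ} {θ : ℝ} {p : ℝ × ℝ}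
    (h : IsCriticalZero (Phi n θ) p) :
    Real.cos θ * (hermiteH n).eval p.1 + Real.sin θ * (hermiteH n).eval p.2 = 0 ∧
      Real.cos θ * (derivative (hermiteH n)).eval p.1 = 0 ∧
      Real.sin θ * (derivative (hermiteH n)).eval p.2 = 0 := by
  obtain ⟨x, y⟩ := p
  obtain ⟨h0, h1⟩ := h
  have hF : Real.cos θ * (hermiteH n).eval x + Real.sin θ * (hermiteH n).eval y = 0 :=
    (mul_eq_zero.1 h0).resolve_right (Real.exp_ne_zero _)
  have hdiff : DifferentiableAt ℝ (Phi n θ) (x, y) := by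
    unfold Phi
    have h2 : Differentiable ℝ fun t => (hermiteH n).eval t := (hermiteH n).differentiable
    have h3 : Differentiable ℝ fun p : ℝ × ℝ => (hermiteH n).eval p.1 :=
      h2.comp differentiable_fst
    have h4 : Differentiable ℝ fun p : ℝ × ℝ => (hermiteH n).eval p.2 :=
      h2.comp differentiable_snd
    exact Differentiable.differentiableAt (by fun_prop)
  have hfd : HasFDerivAt (Phi n θ) 0 (x, y) := h1 ▸ hdiff.hasFDerivAt
  refine ⟨hF, ?_, ?_⟩
  · have h2 : HasDerivAt (fun t => Phi n θ (t, y)) 0 x := by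
      have := hfd.comp_hasDerivAt x ((hasDerivAt_id x).prodMk (hasDerivAt_const x y))
      rwa [_root_.zero_apply] at this
    have h3 : DifferentiableAt ℝ (fun t => Real.exp (-(t ^ 2 + y ^ 2) / 2)) x := by fun_prop
    have h4 := ((((hermiteH n).hasDerivAt x).const_mul (Real.cos θ)).add_const
      (Real.sin θ * (hermiteH n).eval y)).mul h3.hasDerivAt
    have h5 := h4.unique h2
    rw [hF, zero_mul, add_zero] at h5
    exact (mul_eq_zero.1 h5).resolve_right (Real.exp_ne_zero _)
  · have h2 : HasDerivAt (fun t => Phi n θ (x, t)) 0 y := by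
      have := hfd.comp_hasDerivAt y ((hasDerivAt_const y x).prodMk (hasDerivAt_id y))
      rwa [_root_.zero_apply] at this
    have h3 : DifferentiableAt ℝ (fun t => Real.exp (-(x ^ 2 + t ^ 2) / 2)) y := by fun_prop
    have h4 := ((((hermiteH n).hasDerivAt y).const_mul (Real.sin θ)).const_add
      (Real.cos θ * (hermiteH n).eval x)).mul h3.hasDerivAt
    have h5 := h4.unique h2
    rw [hF, zero_mul, add_zero] at h5
    exact (mul_eq_zero.1 h5).resolve_right (Real.exp_ne_zero _)

theorem Phi_neg {n : ℕ} (hn : Odd n) (θ : ℝ) (p : ℝ × ℝ) : Phi n θ (-p) = -Phi n θ p := by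
  simp only [Phi, Prod.fst_neg, Prod.snd_neg, eval_neg_hermiteH, hn.neg_one_pow, neg_sq]
  ring

/-- For odd `n`, there exists `θ_c > 0` such that for all
`0 < θ < θ_c`, `Φ_n^θ` has no critical zero, its nodal set is connected, and it
has exactly two nodal domains. -/
theorem small_theta_two_nodal_domains (n : ℕ) (hodd : Odd n) (hpos : 0 < n) :
    ∃ θc : ℝ, 0 < θc ∧ ∀ θ : ℝ, 0 < θ → θ < θc →
      (∀ p : ℝ × ℝ, ¬ IsCriticalZero (Phi n θ) p) ∧
      IsConnected (nodalSet (Phi n θ)) ∧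
      (nodalDomains (Phi n θ)).ncard = 2 := by
  obtain ⟨k, rfl⟩ : ∃ k, n = k + 1 := ⟨n - 1, by omega⟩
  set P : ℝ → ℝ := fun t => (hermiteH (k + 1)).eval t with hPdef
  set P' : ℝ → ℝ := fun t => 2 * (k + 1) * (hermiteH k).eval t with hP'def
  have hP : ∀ t, HasDerivAt P (P' t) t := hasDerivAt_eval_hermiteH_succ k
  have hcont : Continuous P := (hermiteH (k + 1)).continuous
  have hcont' : Continuous P' := continuous_const.mul (hermiteH k).continuous
  have hodd_P : ∀ t, P (-t) = -P t := fun t => by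
    simp [hPdef, eval_neg_hermiteH, hodd.neg_one_pow]
  have htop : Tendsto P atTop atTop := tendsto_eval_hermiteH_succ_atTop k
  have hbot : Tendsto P atBot atBot := by
    have h := tendsto_neg_atTop_atBot.comp (htop.comp tendsto_neg_atBot_atTop)
    refine h.congr fun t => ?_
    simp [hodd_P]
  have hR0 : (0 : ℝ) ≤ k + 1 := by positivity
  have hk : Even k := by
    rcases hodd with ⟨j, hj⟩
    exact ⟨j, by omega⟩
  have hR : ∀ t, (k + 1 : ℝ) ≤ |t| → 0 < P' t := by
    intro t ht
    have h1 : (hermiteH k).eval |t| = (hermiteH k).eval t := by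
      rcases abs_choice t with h | h <;> simp [h, eval_neg_hermiteH, hk.neg_one_pow]
    have h2 := (one_le_eval_hermiteH_and_le_succ k ht).1
    rw [h1] at h2
    simp only [hP'def]
    positivity
  obtain ⟨t₀, -, ht₀⟩ := (isCompact_Icc (a := -(k + 1 : ℝ)) (b := k + 1)).exists_isMinOn
    ⟨0, by linarith, by linarith⟩ ((hcont.abs.add hcont'.abs).continuousOn)
  set m := |P t₀| + |P' t₀| with hmdef
  have hm0 : 0 < m := by
    refine lt_of_le_of_ne (by positivity) fun h => ?_
    have h1 : |P t₀| = 0 := by linarith [abs_nonneg (P t₀), abs_nonneg (P' t₀)]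
    have h2 : |P' t₀| = 0 := by linarith [abs_nonneg (P t₀), abs_nonneg (P' t₀)]
    have hk0 : (2 * (k + 1) : ℝ) ≠ 0 := by positivity
    exact eval_hermiteH_succ_ne_zero ((mul_eq_zero.1 (abs_eq_zero.1 h2)).resolve_left hk0)
      (abs_eq_zero.1 h1)
  have hcritR : ∀ t, P' t = 0 → |t| ≤ k + 1 := by
    intro t ht
    by_contra h
    exact (hR t (not_le.1 h).le).ne' ht
  have hm : ∀ t, P' t = 0 → m ≤ |P t| := by
    intro t ht
    have := ht₀ (abs_le.1 (hcritR t ht))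
    simpa [ht] using this
  obtain ⟨M, hM⟩ := (isCompact_Icc (a := -(k + 1 : ℝ)) (b := k + 1)).exists_bound_of_continuousOn
    hcont.continuousOn
  have hev : ∀ᶠ θ in 𝓝 (0 : ℝ), Real.sin θ * M < Real.cos θ * m ∧ 0 < Real.cos θ := by
    have h1 : Continuous fun θ => Real.sin θ * M := by fun_prop
    have h2 : Continuous fun θ => Real.cos θ * m := by fun_prop
    exact (h1.continuousAt.eventually_lt h2.continuousAt (by simpa using hm0)).and
      (continuousAt_const.eventually_lt Real.continuous_cos.continuousAt (by simp))
  obtain ⟨ε, hε, hball⟩ := Metric.eventually_nhds_iff.1 hev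
  refine ⟨min ε π, lt_min hε Real.pi_pos, fun θ hθ0 hθ => ?_⟩
  obtain ⟨hsM, hc⟩ := hball (y := θ) (by
    rw [Real.dist_0_eq_abs, abs_of_pos hθ0]
    exact hθ.trans_le (min_le_left _ _))
  have hs : 0 < Real.sin θ := Real.sin_pos_of_pos_of_lt_pi hθ0 (hθ.trans_le (min_le_right _ _))
  have hMs : ∀ t, |t| ≤ (k + 1 : ℝ) → Real.sin θ * |P t| < Real.cos θ * m := fun t ht =>
    (mul_le_mul_of_nonneg_left (hM t (abs_le.1 ht)) hs.le).trans_lt hsM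
  have hposF := isConnected_setOf_pos_add hP htop hbot hc hs hR0 hR hm hMs
  have hpos : IsConnected {p | 0 < Phi (k + 1) θ p} := by
    convert hposF using 3 with p
    exact mul_pos_iff_of_pos_right (Real.exp_pos _)
  have hneg : IsConnected {p | Phi (k + 1) θ p < 0} := by
    convert hpos.image _ continuous_neg.continuousOn using 1
    ext p
    simp [Phi_neg hodd]
  have hcrit : ∀ p, ¬ IsCriticalZero (Phi (k + 1) θ) p := by
    intro p hp
    obtain ⟨h0, h1, h2⟩ := hp.eval_derivative_eq_zero
    rw [derivative_hermiteH_succ, eval_mul, eval_C] at h1 h2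
    have h1' : P' p.1 = 0 := (mul_eq_zero.1 h1).resolve_left hc.ne'
    have h2' : P' p.2 = 0 := (mul_eq_zero.1 h2).resolve_left hs.ne'
    have h3 := mul_le_mul_of_nonneg_left (hm _ h1') hc.le
    have h4 := hMs _ (hcritR _ h2')
    have h5 : Real.cos θ * P p.1 = -(Real.sin θ * P p.2) := eq_neg_of_add_eq_zero_left h0
    have h6 := congrArg abs h5
    rw [abs_neg, abs_mul, abs_mul, abs_of_pos hc, abs_of_pos hs] at h6
    linarith
  exact ⟨hcrit, isConnected_nodalSet (continuous_Phi _ _) hcrit hpos hneg,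
    ncard_nodalDomains_eq_two (continuous_Phi _ _) hpos hneg⟩
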